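/- Let f : 𝔻ⁿ → 𝔻 be holomorphic, C¹-smooth on the closed polydisc, and suppose f(ζ) = η for some ζ ∈ 𝕋ⁿ and η ∈ 𝕋. Suppose also that for each j = 1,…,n the one-variable function z_j ↦ f(ζ_1,…,ζ_{j-1}, z_j, ζ_{j+1},…,ζ_n) is not constant. Then there exist a neighbourhood U of ζ and a constant C > 0 such that for all sufficiently small δ > 0, the Lebesgue volume of {z ∈ 𝔻ⁿ ∩ U : |f(z) - η| ≤ δ} is at most C·δ^{n+1}. -/

import Mathlib

open MeasureTheory Metric Set ENNReal

noncomputable section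

/-- The open unit polydisc in `ℂⁿ`. -/
def polydisc (n : ℕ) : Set (Fin n → ℂ) := {z | ∀ j, ‖z j‖ < 1}

/-- The closed unit polydisc in `ℂⁿ`. -/
def closedPolydisc (n : ℕ) : Set (Fin n → ℂ) := {z | ∀ j, ‖z j‖ ≤ 1}

/-- The distinguished boundary (torus) of the polydisc. -/
def torus (n : ℕ) : Set (Fin n → ℂ) := {z | ∀ j, ‖z j‖ = 1}

/-!
Since `f` is `C¹` up to the boundary and holomorphic inside, its derivative is complex linear also
at boundary points. The maximum principle and the Hopf lemma for the slice through `ζ` in the `j`-th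
coordinate show that the derivative of `f` at `ζ` in the outward direction `ζ j` has positive inner
product with `η`, for every `j`. As `‖f‖ ≤ 1`, near `ζ` the inequality `‖f z - η‖ ≤ δ` therefore
forces `1 - ‖z j‖ ≲ δ` for all `j`, while the slices of this sublevel set in a single coordinate
have diameter `≲ δ`. Integrating over annuli of area `≲ δ` in the other `n - 1` coordinates, the
volume is `≲ δ² · δⁿ⁻¹`.
-/

section RestrictScalars

variable {𝕜 𝕜' E F : Type*} [NontriviallyNormedField 𝕜] [NontriviallyNormedField 𝕜']
  [NormedAlgebra 𝕜 𝕜'] [NormedAddCommGroup E] [NormedSpace 𝕜 E] [NormedSpace 𝕜' E]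
  [IsScalarTower 𝕜 𝕜' E] [NormedAddCommGroup F] [NormedSpace 𝕜 F] [NormedSpace 𝕜' F]
  [IsScalarTower 𝕜 𝕜' F] {f : E → F} {s : Set E}

-- The `𝕜'`-linear maps form a closed subspace, so linearity of the derivative passes to the limit.
theorem differentiableOn_of_interior_of_contDiffOn_one [CompleteSpace F]
    (hs : UniqueDiffOn 𝕜 s) (hsi : s ⊆ closure (interior s)) (hf : ContDiffOn 𝕜 1 f s)
    (hfi : DifferentiableOn 𝕜' f (interior s)) : DifferentiableOn 𝕜' f s := by
  have hclosed : IsClosed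
      (range (ContinuousLinearMap.restrictScalars 𝕜 : (E →L[𝕜'] F) → E →L[𝕜] F)) :=
    (ContinuousLinearMap.restrictScalarsIsometry 𝕜' E F 𝕜 𝕜).isometry.isClosedEmbedding
      |>.isClosed_range
  have hint : MapsTo (fderivWithin 𝕜 f s) (interior s)
      (range (ContinuousLinearMap.restrictScalars 𝕜 : (E →L[𝕜'] F) → E →L[𝕜] F)) := by
    intro z hz
    have hfz : DifferentiableAt 𝕜' f z := hfi.differentiableAt (isOpen_interior.mem_nhds hz)
    rw [fderivWithin_of_mem_nhds (mem_interior_iff_mem_nhds.1 hz), hfz.fderiv_restrictScalars 𝕜]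
    exact mem_range_self _
  intro z hz
  rw [differentiableWithinAt_iff_restrictScalars 𝕜 (hf.differentiableOn one_ne_zero z hz) (hs z hz)]
  have hcont : ContinuousWithinAt (fderivWithin 𝕜 f s) (interior s) z :=
    (hf.continuousOn_fderivWithin hs le_rfl z hz).mono interior_subset
  exact hclosed.closure_subset (hcont.mem_closure (hsi hz) hint)

theorem contDiffOn_one_of_restrictScalars (hs : UniqueDiffOn 𝕜 s) (hf : ContDiffOn 𝕜 1 f s)
    (hf' : DifferentiableOn 𝕜' f s) : ContDiffOn 𝕜' 1 f s := by
  have hcont : ContinuousOn (fderivWithin 𝕜' f s) s := by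
    rw [(ContinuousLinearMap.restrictScalarsIsometry 𝕜' E F 𝕜 𝕜).isometry.isEmbedding.isInducing
      |>.continuousOn_iff]
    refine (hf.continuousOn_fderivWithin hs le_rfl).congr fun z hz => ?_
    exact (hf' z hz).restrictScalars_fderivWithin 𝕜 (hs z hz)
  rw [show (1 : WithTop ℕ∞) = 0 + 1 from rfl,
    contDiffOn_succ_iff_fderivWithin (hs.mono_field (𝕜' := 𝕜'))]
  exact ⟨hf', by simp, contDiffOn_zero.2 hcont⟩

end RestrictScalars

theorem contDiffOn_complex_one_of_interior {E F : Type*} [NormedAddCommGroup E] [NormedSpace ℂ E]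
    [NormedAddCommGroup F] [NormedSpace ℂ F] [CompleteSpace F] {f : E → F} {s : Set E}
    (hs : Convex ℝ s) (hne : (interior s).Nonempty) (hf : ContDiffOn ℝ 1 f s)
    (hfi : DifferentiableOn ℂ f (interior s)) : ContDiffOn ℂ 1 f s := by
  have hu : UniqueDiffOn ℝ s := uniqueDiffOn_convex hs hne
  have hsi : s ⊆ closure (interior s) := by
    rw [hs.closure_interior_eq_closure_of_nonempty_interior hne]
    exact subset_closure
  exact contDiffOn_one_of_restrictScalars hu hf
    (differentiableOn_of_interior_of_contDiffOn_one hu hsi hf hfi)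

theorem exists_approximatesLinearOn_inter_closedBall {𝕜 E F : Type*} [RCLike 𝕜]
    [NormedAddCommGroup E] [NormedSpace ℝ E] [NormedSpace 𝕜 E]
    [NormedAddCommGroup F] [NormedSpace 𝕜 F] {f : E → F} {s : Set E} {x : E} {c : NNReal}
    (hs : Convex ℝ s) (hu : UniqueDiffOn 𝕜 s) (hf : ContDiffOn 𝕜 1 f s) (hx : x ∈ s)
    (hc : 0 < c) :
    ∃ r > 0, ApproximatesLinearOn f (fderivWithin 𝕜 f s x) (s ∩ closedBall x r) c := by
  obtain ⟨ρ, hρ, hclose⟩ :=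
    Metric.continuousWithinAt_iff.1 (hf.continuousOn_fderivWithin hu le_rfl x hx) c hc
  refine ⟨ρ / 2, half_pos hρ, fun y hy z hz => ?_⟩
  refine (hs.inter (convex_closedBall x (ρ / 2))).norm_image_sub_le_of_norm_hasFDerivWithin_le'
    (f' := fderivWithin 𝕜 f s) (fun w hw => ?_) (fun w hw => ?_) hz hy
  · exact (hf.differentiableOn one_ne_zero w hw.1).hasFDerivWithinAt.mono inter_subset_left
  · rw [← dist_eq_norm]
    exact (hclose hw.1 ((mem_closedBall.1 hw.2).trans_lt (half_lt_self hρ))).le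

theorem mul_norm_le_norm_sub_of_approximatesLinearOn {𝕜 E F : Type*} [NontriviallyNormedField 𝕜]
    [NormedAddCommGroup E] [NormedSpace 𝕜 E] [NormedAddCommGroup F] [NormedSpace 𝕜 F] {f : E → F}
    {L : E →L[𝕜] F} {s : Set E} {κ : NNReal} (hf : ApproximatesLinearOn f L s κ) {x y v : E} {a : 𝕜}
    (hx : x ∈ s) (hy : y ∈ s) (hxy : x - y = a • v) :
    (‖L v‖ - κ * ‖v‖) * ‖a‖ ≤ ‖f x - f y‖ := by
  have happrox := hf x hx y hy
  rw [hxy, map_smul, norm_smul] at happrox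
  have htri := norm_le_norm_add_norm_sub (f x - f y) (a • L v)
  rw [norm_smul] at htri
  linarith

theorem mul_le_inner_sub_of_approximatesLinearOn {E F : Type*} [NormedAddCommGroup E]
    [NormedSpace ℝ E] [NormedAddCommGroup F] [InnerProductSpace ℝ F] {f : E → F} {L : E →L[ℝ] F}
    {s : Set E} {κ : NNReal} (hf : ApproximatesLinearOn f L s κ) {x v : E} {t : ℝ} (ht : 0 ≤ t)
    (hx : x ∈ s) (hxv : x + t • v ∈ s) (η : F) :
    (inner ℝ η (L v) - κ * ‖η‖ * ‖v‖) * t ≤ inner ℝ η (f (x + t • v) - f x) := by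
  have happrox := hf _ hxv x hx
  rw [add_sub_cancel_left, map_smul, norm_smul, Real.norm_of_nonneg ht] at happrox
  have herror : -(‖η‖ * (κ * (t * ‖v‖))) ≤ inner ℝ η (f (x + t • v) - f x - t • L v) :=
    calc -(‖η‖ * (κ * (t * ‖v‖))) ≤ -(‖η‖ * ‖f (x + t • v) - f x - t • L v‖) := by gcongr
      _ ≤ _ := neg_le_of_abs_le (abs_real_inner_le_norm _ _)
  rw [inner_sub_right, real_inner_smul_right] at herror
  linarith

section Disc

variable {p : ℂ → ℂ} {z : ℂ} {R : ℝ}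

theorem norm_mul_sub_norm_le_of_re_nonneg (hp : DifferentiableOn ℂ p (ball 0 R))
    (hre : ∀ w ∈ ball (0 : ℂ) R, 0 ≤ (p w).re) (hz : z ∈ ball 0 R) :
    ‖p z‖ * (R - ‖z‖) ≤ ‖p 0‖ * (R + ‖z‖) := by
  have hzR : 0 < R - ‖z‖ := sub_pos.2 (mem_ball_zero_iff.1 hz)
  refine le_of_forall_pos_le_add fun ε hε => ?_
  obtain ⟨M, hM, hMε⟩ : ∃ M > 0, 2 * M * ‖z‖ ≤ ε := by
    refine ⟨ε / (2 * (‖z‖ + 1)), by positivity, ?_⟩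
    rw [mul_div_assoc', div_mul_eq_mul_div, div_le_iff₀ (by positivity)]
    nlinarith [norm_nonneg z]
  have hborel := Complex.borelCaratheodory hM hp.neg
    (fun w hw => (neg_nonpos.2 (hre w hw)).trans hM.le)
    (nonempty_ball.1 ⟨z, hz⟩) hz
  simp only [Pi.neg_apply, norm_neg] at hborel
  rw [← add_div, le_div_iff₀ hzR] at hborel
  linarith

-- The upper bound for `p⁻¹`, which also has positive real part.
theorem norm_mul_sub_norm_le_of_re_pos (hp : DifferentiableOn ℂ p (ball 0 R))
    (hre : ∀ w ∈ ball (0 : ℂ) R, 0 < (p w).re) (hz : z ∈ ball 0 R) :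
    ‖p 0‖ * (R - ‖z‖) ≤ ‖p z‖ * (R + ‖z‖) := by
  have hne : ∀ w ∈ ball (0 : ℂ) R, p w ≠ 0 := fun w hw h0 => by simpa [h0] using hre w hw
  have hinv := norm_mul_sub_norm_le_of_re_nonneg (p := fun w => (p w)⁻¹) (hp.inv hne)
    (fun w hw => by
      rw [Complex.inv_re]
      exact div_nonneg (hre w hw).le (Complex.normSq_nonneg _)) hz
  have h0 : 0 < ‖p 0‖ := norm_pos_iff.2 (hne 0 (mem_ball_self (nonempty_ball.1 ⟨z, hz⟩)))
  have hz0 : 0 < ‖p z‖ := norm_pos_iff.2 (hne z hz)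
  rw [norm_inv, norm_inv, inv_mul_le_iff₀ hz0, mul_left_comm, le_inv_mul_iff₀ h0] at hinv
  exact hinv

-- Apply the previous bound to `1 - u ∘ g`, where `u` is a functional norming `g z`.
theorem one_sub_norm_mul_sub_norm_le {F : Type*} [NormedAddCommGroup F] [NormedSpace ℂ F]
    {g : ℂ → F} (hg : DifferentiableOn ℂ g (ball 0 R))
    (hlt : ∀ w ∈ ball (0 : ℂ) R, ‖g w‖ < 1) (hz : z ∈ ball 0 R) :
    (1 - ‖g 0‖) * (R - ‖z‖) ≤ (1 - ‖g z‖) * (R + ‖z‖) := by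
  obtain ⟨u, hu, huz⟩ := exists_dual_vector'' ℂ (g z)
  have hre : ∀ w, 1 - ‖g w‖ ≤ (1 - u (g w)).re := fun w => by
    have := (Complex.re_le_norm (u (g w))).trans (u.le_of_opNorm_le hu (g w))
    rw [Complex.sub_re, Complex.one_re]
    linarith
  have hbound := norm_mul_sub_norm_le_of_re_pos (p := fun w => 1 - u (g w))
    (u.differentiable.comp_differentiableOn hg |>.const_sub 1)
    (fun w hw => (sub_pos.2 (hlt w hw)).trans_le (hre w)) hz
  have hnorm : ‖1 - u (g z)‖ = 1 - ‖g z‖ := by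
    rw [huz, ← RCLike.ofReal_one, ← RCLike.ofReal_sub, RCLike.norm_ofReal,
      abs_of_pos (sub_pos.2 (hlt z hz))]
  rw [hnorm] at hbound
  refine le_trans ?_ hbound
  gcongr
  · exact sub_nonneg.2 (mem_ball_zero_iff.1 hz).le
  · exact (hre 0).trans (Complex.re_le_norm _)

theorem norm_le_one_sub_mul_one_sub_norm {F : Type*} [NormedAddCommGroup F] [NormedSpace ℂ F]
    {g : ℂ → F} (hg : DifferentiableOn ℂ g (ball 0 1))
    (hlt : ∀ w ∈ ball (0 : ℂ) 1, ‖g w‖ < 1) (hz : z ∈ ball 0 1) :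
    ‖g z‖ ≤ 1 - (1 - ‖g 0‖) / 2 * (1 - ‖z‖) := by
  have hz1 : ‖z‖ < 1 := mem_ball_zero_iff.1 hz
  nlinarith [one_sub_norm_mul_sub_norm_le hg hlt hz, hlt z hz]

end Disc

theorem norm_lt_of_forall_norm_le_of_ne {E F : Type*} [NormedAddCommGroup E] [NormedSpace ℂ E]
    [NormedAddCommGroup F] [NormedSpace ℂ F] [StrictConvexSpace ℝ F] {f : E → F} {U : Set E}
    {C : ℝ} (hU : IsPreconnected U) (ho : IsOpen U) (hf : DifferentiableOn ℂ f U)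
    (hle : ∀ z ∈ U, ‖f z‖ ≤ C) (hne : ∃ z ∈ U, ∃ w ∈ U, f z ≠ f w) {x : E} (hx : x ∈ U) :
    ‖f x‖ < C := by
  refine (hle x hx).lt_of_ne fun hC => ?_
  have hmax : IsMaxOn (norm ∘ f) U x := fun z hz => (hle z hz).trans hC.ge
  have hconst := Complex.eqOn_of_isPreconnected_of_isMaxOn_norm hU ho hf hx hmax
  obtain ⟨z, hz, w, hw, hzw⟩ := hne
  exact hzw ((hconst hz).trans (hconst hw).symm)

-- Compare `g` with the Hopf bound along the radius ending at `ξ`, where both sides equal `1`.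
theorem inner_mul_derivWithin_pos {g : ℂ → ℂ} {g' ξ : ℂ} (hg : DifferentiableOn ℂ g (ball 0 1))
    (hlt : ∀ z ∈ ball (0 : ℂ) 1, ‖g z‖ < 1) (hξ : ‖ξ‖ = 1) (hgξ : ‖g ξ‖ = 1)
    (hg' : HasDerivWithinAt g g' (closedBall 0 1) ξ) : 0 < inner ℝ (g ξ) (ξ * g') := by
  set k : ℝ := (1 - ‖g 0‖) / 2
  have hk0 : 0 < k := half_pos (sub_pos.2 (hlt 0 (mem_ball_self one_pos)))
  let φ : ℂ → ℝ := fun z => innerSL ℝ (g ξ) (g z) - k * innerSL ℝ ξ z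
  have hmax : IsMaxOn φ (segment ℝ ξ 0) ξ := by
    rintro _ ⟨t, s, ht, hs, hts, rfl⟩
    rw [smul_zero, add_zero]
    have hnorm : ‖t • ξ‖ = t := by rw [norm_smul, hξ, mul_one, Real.norm_of_nonneg ht]
    have hgt : ‖g (t • ξ)‖ ≤ 1 - k * (1 - t) := by
      rcases (show t ≤ 1 by linarith).eq_or_lt with rfl | ht1
      · simp [hgξ]
      · simpa only [hnorm] using norm_le_one_sub_mul_one_sub_norm hg hlt
          (mem_ball_zero_iff.2 (hnorm.trans_lt ht1))
    calc φ (t • ξ) = inner ℝ (g ξ) (g (t • ξ)) - k * t := by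
          simp only [φ, innerSL_apply_apply, real_inner_smul_right, real_inner_self_eq_norm_sq, hξ,
            one_pow, mul_one]
      _ ≤ ‖g (t • ξ)‖ - k * t := by
          gcongr
          simpa [hgξ] using real_inner_le_norm (g ξ) (g (t • ξ))
      _ ≤ 1 - k := by linarith
      _ = φ ξ := by
          simp only [φ, innerSL_apply_apply, real_inner_self_eq_norm_sq, hξ, hgξ, one_pow, mul_one]
  have hseg : segment ℝ ξ 0 ⊆ closedBall 0 1 :=
    (convex_closedBall 0 1).segment_subset (by simp [hξ]) (by simp)
  have hφ : HasFDerivWithinAt φ _ (segment ℝ ξ 0) ξ :=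
    ((innerSL ℝ (g ξ)).hasFDerivAt.comp_hasFDerivWithinAt ξ
      ((hg'.hasFDerivWithinAt.restrictScalars ℝ).mono hseg)).sub
      ((innerSL ℝ ξ).hasFDerivWithinAt.const_mul k)
  have hle := hmax.localize.hasFDerivWithinAt_nonpos hφ
    (sub_mem_posTangentConeAt_of_segment_subset subset_rfl)
  have hle' : -inner ℝ (g ξ) (ξ * g') + k ≤ 0 := by
    simpa [hξ, -Complex.inner] using hle
  linarith

section Polydisc

variable {ι : Type*} [Fintype ι] [DecidableEq ι] {ζ z : ι → ℂ}

theorem update_mem_closedBall_zero_one {x : ℂ} (hζ : ζ ∈ closedBall 0 1) (j : ι)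
    (hx : x ∈ closedBall 0 1) : Function.update ζ j x ∈ closedBall 0 1 := by
  simp only [mem_closedBall_zero_iff, pi_norm_le_iff_of_nonneg zero_le_one] at hζ hx ⊢
  exact (Function.forall_update_iff ζ fun _ y => ‖y‖ ≤ 1).2 ⟨hx, fun i _ => hζ i⟩

theorem add_smul_single_mem_closedBall_zero_one (hz : z ∈ closedBall 0 1) {j : ι}
    (hζ : ‖ζ j‖ = 1) :
    z + (1 - ‖z j‖) • (Pi.single j (ζ j) : ι → ℂ) ∈ closedBall 0 1 := by
  have hz' : ∀ i, ‖z i‖ ≤ 1 := by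
    simpa only [mem_closedBall_zero_iff, pi_norm_le_iff_of_nonneg zero_le_one] using hz
  rw [mem_closedBall_zero_iff, pi_norm_le_iff_of_nonneg zero_le_one]
  intro i
  rcases eq_or_ne i j with rfl | hij
  · calc ‖(z + (1 - ‖z i‖) • (Pi.single i (ζ i) : ι → ℂ)) i‖
        ≤ ‖z i‖ + ‖(1 - ‖z i‖) • ζ i‖ := by
          simpa using norm_add_le (z i) ((1 - ‖z i‖) • ζ i)
      _ = 1 := by
        rw [norm_smul, hζ, Real.norm_of_nonneg (sub_nonneg.2 (hz' i))]
        ring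
  · simpa [hij] using hz' i

theorem inner_fderivWithin_single_pos {f : (ι → ℂ) → ℂ}
    (hf : DifferentiableOn ℂ f (closedBall 0 1))
    (hmap : MapsTo f (closedBall 0 1) (closedBall 0 1)) (hζ : ζ ∈ closedBall 0 1) {j : ι}
    (hζj : ‖ζ j‖ = 1) (hfζ : ‖f ζ‖ = 1)
    (hne : ∃ z ∈ ball (0 : ℂ) 1, ∃ w ∈ ball (0 : ℂ) 1,
      f (Function.update ζ j z) ≠ f (Function.update ζ j w)) :
    0 < inner ℝ (f ζ) (fderivWithin ℂ f (closedBall 0 1) ζ (Pi.single j (ζ j))) := by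
  have hupd : MapsTo (Function.update ζ j) (closedBall 0 1) (closedBall 0 1) :=
    fun x hx => update_mem_closedBall_zero_one hζ j hx
  have hslice : DifferentiableOn ℂ (fun x => f (Function.update ζ j x)) (ball 0 1) :=
    (hf.comp (fun x _ => (hasFDerivAt_update ζ x).differentiableAt.differentiableWithinAt)
      hupd).mono ball_subset_closedBall
  have hlt : ∀ x ∈ ball (0 : ℂ) 1, ‖f (Function.update ζ j x)‖ < 1 := fun x hx =>
    norm_lt_of_forall_norm_le_of_ne (convex_ball 0 1).isPreconnected isOpen_ball hslice
      (fun y hy => mem_closedBall_zero_iff.1 (hmap (hupd (ball_subset_closedBall hy)))) hne hx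
  have hderiv : HasDerivWithinAt (fun x => f (Function.update ζ j x))
      (fderivWithin ℂ f (closedBall 0 1) ζ (Pi.single j 1)) (closedBall 0 1) (ζ j) := by
    exact HasFDerivWithinAt.comp_hasDerivWithinAt_of_eq (ζ j) (hf ζ hζ).hasFDerivWithinAt
      (hasDerivAt_update ζ j (ζ j)).hasDerivWithinAt hupd (Function.update_eq_self j ζ).symm
  have hpos := inner_mul_derivWithin_pos hslice hlt hζj (by simpa using hfζ) hderiv
  rwa [Function.update_eq_self, ← smul_eq_mul, ← map_smul, ← Pi.single_smul, smul_eq_mul,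
    mul_one] at hpos

-- Moving from `z` outwards by `1 - ‖z j‖` in the direction `ζ j` stays in the closed polydisc,
-- where `inner ℝ η ∘ f` is at most `1`, and increases it at rate at least `κ`.
theorem mul_one_sub_norm_le_norm_sub {f : (ι → ℂ) → ℂ} {L : (ι → ℂ) →L[ℂ] ℂ} {η : ℂ} {r : ℝ}
    {κ : NNReal} (hf : ApproximatesLinearOn f L (closedBall 0 1 ∩ closedBall ζ (2 * r)) κ)
    (hmap : MapsTo f (closedBall 0 1) (closedBall 0 1)) {j : ι} (hζj : ‖ζ j‖ = 1) (hη : ‖η‖ = 1)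
    (hL : 2 * κ ≤ inner ℝ η (L (Pi.single j (ζ j)))) (hz : z ∈ closedBall 0 1 ∩ closedBall ζ r) :
    κ * (1 - ‖z j‖) ≤ ‖f z - η‖ := by
  set e : ι → ℂ := Pi.single j (ζ j) with he
  set t : ℝ := 1 - ‖z j‖
  have ht0 : 0 ≤ t := sub_nonneg.2 ((norm_le_pi_norm z j).trans (mem_closedBall_zero_iff.1 hz.1))
  have henorm : ‖e‖ = 1 := by rw [he, Pi.norm_single, hζj]
  have hzr : ‖z - ζ‖ ≤ r := mem_closedBall_iff_norm.1 hz.2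
  have htr : t ≤ r :=
    calc t = ‖ζ j‖ - ‖z j‖ := by rw [hζj]
      _ ≤ ‖(z - ζ) j‖ := by
        rw [Pi.sub_apply, norm_sub_rev]
        exact norm_sub_norm_le _ _
      _ ≤ r := (norm_le_pi_norm (z - ζ) j).trans hzr
  have hw : z + t • e ∈ closedBall 0 1 := add_smul_single_mem_closedBall_zero_one hz.1 hζj
  have hwr : z + t • e ∈ closedBall ζ (2 * r) := by
    have htri := norm_add_le (z - ζ) (t • e)
    rw [norm_smul, henorm, mul_one, Real.norm_of_nonneg ht0] at htri
    rw [mem_closedBall_iff_norm, add_sub_right_comm]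
    linarith
  have hzr' : z ∈ closedBall ζ (2 * r) := closedBall_subset_closedBall (by linarith) hz.2
  have hfR : ApproximatesLinearOn f (L.restrictScalars ℝ)
      (closedBall 0 1 ∩ closedBall ζ (2 * r)) κ := fun x hx y hy => hf x hx y hy
  have hle_norm (x : ℂ) : inner ℝ η x ≤ ‖x‖ := by simpa [hη] using real_inner_le_norm η x
  calc κ * t ≤ (inner ℝ η (L e) - κ * ‖η‖ * ‖e‖) * t := by
        gcongr
        rw [hη, henorm]
        linarith
    _ ≤ inner ℝ η (f (z + t • e) - f z) :=
        mul_le_inner_sub_of_approximatesLinearOn hfR ht0 ⟨hz.1, hzr'⟩ ⟨hw, hwr⟩ η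
    _ = inner ℝ η (f (z + t • e)) - inner ℝ η (f z) := inner_sub_right _ _ _
    _ ≤ inner ℝ η η - inner ℝ η (f z) := by
        gcongr
        rw [real_inner_self_eq_norm_sq, hη, one_pow]
        exact (hle_norm _).trans (mem_closedBall_zero_iff.1 (hmap hw))
    _ = inner ℝ η (η - f z) := (inner_sub_right _ _ _).symm
    _ ≤ ‖f z - η‖ := by
        rw [norm_sub_rev]
        exact hle_norm _

end Polydisc

theorem mapsTo_closedBall_of_mapsTo_ball {E F : Type*} [NormedAddCommGroup E] [NormedSpace ℝ E]
    [SeminormedAddCommGroup F] {f : E → F} {x : E} {y : F} {r R : ℝ} (hr : r ≠ 0)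
    (hf : ContinuousOn f (closedBall x r)) (hmap : MapsTo f (ball x r) (ball y R)) :
    MapsTo f (closedBall x r) (closedBall y R) := by
  rw [← closure_ball x hr] at hf ⊢
  exact (hmap.closure_of_continuousOn hf).mono_right closure_ball_subset_closedBall

theorem volume_le_of_forall_dist_le {T : Set ℂ} {s : ℝ} (hT : ∀ x ∈ T, ∀ y ∈ T, dist x y ≤ s) :
    volume T ≤ ENNReal.ofReal s ^ 2 * NNReal.pi := by
  rcases T.eq_empty_or_nonempty with rfl | ⟨x, hx⟩
  · simp
  · rw [← Complex.volume_closedBall x]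
    exact measure_mono fun y hy => hT y hy x hx

theorem volume_closedBall_sdiff_ball (x : ℂ) {a b : ℝ} (ha : 0 ≤ a) (hab : a ≤ b) :
    volume (closedBall x b \ ball x a) = ENNReal.ofReal (Real.pi * (b ^ 2 - a ^ 2)) := by
  have hsub : ball x a ⊆ closedBall x b :=
    ball_subset_closedBall.trans (closedBall_subset_closedBall hab)
  rw [measure_sdiff hsub measurableSet_ball.nullMeasurableSet measure_ball_lt_top.ne,
    Complex.volume_closedBall, Complex.volume_ball, mul_sub, ENNReal.ofReal_sub _ (by positivity),
    ENNReal.ofReal_mul Real.pi_nonneg, ENNReal.ofReal_mul Real.pi_nonneg, ENNReal.ofReal_pow ha,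
    ENNReal.ofReal_pow (ha.trans hab), mul_comm, mul_comm (_ ^ 2)]
  simp only [ENNReal.ofReal, ← NNReal.coe_real_pi, Real.toNNReal_coe]

theorem volume_le_mul_prod_of_slice_le {m : ℕ} {α : Fin (m + 1) → Type*} [∀ j, MeasureSpace (α j)]
    [∀ j, SigmaFinite (volume : Measure (α j))] {S : Set (∀ j, α j)} (hS : MeasurableSet S)
    (i : Fin (m + 1)) (A : ∀ j, Set (α (i.succAbove j)))
    (hSA : ∀ z ∈ S, ∀ j, z (i.succAbove j) ∈ A j) {c : ℝ≥0∞}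
    (hslice : ∀ y : ∀ j, α (i.succAbove j), volume {x | i.insertNth x y ∈ S} ≤ c) :
    volume S ≤ c * ∏ j, volume (A j) := by
  have hmp := (volume_preserving_piFinSuccAbove α i).symm
  rw [← hmp.measure_preimage_equiv S, Measure.volume_eq_prod,
    Measure.prod_apply_symm (hmp.measurable hS), ← volume_pi_pi]
  refine (lintegral_mono fun y => ?_).trans (lintegral_indicator_const_le (univ.pi A) c)
  by_cases hy : y ∈ univ.pi A
  · rw [indicator_of_mem hy]
    exact hslice y
  · rw [indicator_of_notMem hy, nonpos_iff_eq_zero]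
    refine measure_mono_null (t := ∅) (fun x hx => hy fun j _ => ?_) measure_empty
    simpa using hSA (i.insertNth x y) hx j

theorem volume_le_of_one_sub_norm_le_of_slice {m : ℕ} {S : Set (Fin (m + 1) → ℂ)}
    (hS : MeasurableSet S) {r s : ℝ} (hr0 : 0 ≤ r) (hr1 : r ≤ 1) (hSball : S ⊆ closedBall 0 1)
    (hSr : ∀ z ∈ S, ∀ j, 1 - ‖z j‖ ≤ r) (i : Fin (m + 1))
    (hslice : ∀ x x' : ℂ, ∀ y : Fin m → ℂ, (i.insertNth x y : Fin (m + 1) → ℂ) ∈ S →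
      (i.insertNth x' y : Fin (m + 1) → ℂ) ∈ S → dist x x' ≤ s) :
    volume S ≤ ENNReal.ofReal s ^ 2 * NNReal.pi * ENNReal.ofReal (2 * Real.pi * r) ^ m := by
  have hannulus : volume (closedBall (0 : ℂ) 1 \ ball 0 (1 - r)) ≤
      ENNReal.ofReal (2 * Real.pi * r) := by
    rw [volume_closedBall_sdiff_ball 0 (sub_nonneg.2 hr1) (sub_le_self 1 hr0)]
    refine ENNReal.ofReal_le_ofReal ?_
    nlinarith [mul_nonneg Real.pi_nonneg (sq_nonneg r)]
  have hmem : ∀ z ∈ S, ∀ j, z (i.succAbove j) ∈ closedBall (0 : ℂ) 1 \ ball 0 (1 - r) := by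
    refine fun z hz j => ⟨mem_closedBall_zero_iff.2 ?_, fun hball => ?_⟩
    · exact (norm_le_pi_norm z _).trans (mem_closedBall_zero_iff.1 (hSball hz))
    · linarith [hSr z hz (i.succAbove j), mem_ball_zero_iff.1 hball]
  refine (volume_le_mul_prod_of_slice_le hS i _ hmem fun y =>
    volume_le_of_forall_dist_le fun x hx x' hx' => hslice x x' y hx hx').trans ?_
  rw [Finset.prod_const, Finset.card_univ, Fintype.card_fin]
  gcongr

theorem dist_le_of_insertNth_mem_sublevel {m : ℕ} {f : (Fin (m + 1) → ℂ) → ℂ}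
    {L : (Fin (m + 1) → ℂ) →L[ℂ] ℂ} {s : Set (Fin (m + 1) → ℂ)} {κ : NNReal}
    (hf : ApproximatesLinearOn f L s κ) (hκ : 0 < κ) {i : Fin (m + 1)} {ξ η : ℂ} (hξ : ‖ξ‖ = 1)
    (hL : 2 * κ ≤ ‖L (Pi.single i ξ)‖) {δ : ℝ} {x x' : ℂ} {y : Fin m → ℂ}
    (hx : i.insertNth x y ∈ {z ∈ s | ‖f z - η‖ ≤ δ})
    (hx' : i.insertNth x' y ∈ {z ∈ s | ‖f z - η‖ ≤ δ}) : dist x x' ≤ 2 * (δ / κ) := by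
  have hξ0 : ξ ≠ 0 := norm_ne_zero_iff.1 (hξ ▸ one_ne_zero)
  have hsub : (i.insertNth x y - i.insertNth x' y : Fin (m + 1) → ℂ) =
      ((x - x') / ξ) • Pi.single i ξ := by
    rw [Fin.insertNth_sub_same, ← Pi.single_smul, smul_eq_mul, div_mul_cancel₀ _ hξ0]
  have hlower := mul_norm_le_norm_sub_of_approximatesLinearOn hf hx.1 hx'.1 hsub
  rw [Pi.norm_single, hξ, norm_div, hξ, div_one, mul_one, ← dist_eq_norm, ← dist_eq_norm] at hlower
  have hupper : dist (f (i.insertNth x y)) (f (i.insertNth x' y)) ≤ δ + δ :=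
    (dist_triangle_right _ _ η).trans
      (add_le_add (dist_eq_norm (f _) η ▸ hx.2) (dist_eq_norm (f _) η ▸ hx'.2))
  rw [mul_div_assoc', le_div_iff₀ (NNReal.coe_pos.2 hκ)]
  nlinarith [mul_le_mul_of_nonneg_right hL (dist_nonneg (x := x) (y := x'))]

theorem volume_sublevel_le {m : ℕ} {f : (Fin (m + 1) → ℂ) → ℂ} {L : (Fin (m + 1) → ℂ) →L[ℂ] ℂ}
    {ζ : Fin (m + 1) → ℂ} {η : ℂ} {r δ : ℝ} {κ : NNReal}
    (hf : ApproximatesLinearOn f L (closedBall 0 1 ∩ closedBall ζ (2 * r)) κ)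
    (hmap : MapsTo f (closedBall 0 1) (closedBall 0 1)) (hζ : ∀ j, ‖ζ j‖ = 1) (hη : ‖η‖ = 1)
    (hκ : 0 < κ) (hL : ∀ j, 2 * κ ≤ inner ℝ η (L (Pi.single j (ζ j)))) (hr : 0 ≤ r) (hδ : 0 ≤ δ)
    (hδκ : δ ≤ κ) :
    volume {z ∈ closedBall 0 1 ∩ closedBall ζ r | ‖f z - η‖ ≤ δ} ≤
      ENNReal.ofReal ((2 / κ) ^ 2 * Real.pi * (2 * Real.pi / κ) ^ m * δ ^ (m + 2)) := by
  have hκ0 : (0 : ℝ) < κ := hκ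
  have hsub : closedBall 0 1 ∩ closedBall ζ r ⊆ closedBall 0 1 ∩ closedBall ζ (2 * r) := by
    gcongr
    linarith
  have hclosed : IsClosed {z ∈ closedBall 0 1 ∩ closedBall ζ r | ‖f z - η‖ ≤ δ} :=
    ((hf.continuousOn.mono hsub).sub continuousOn_const).norm.preimage_isClosed_of_isClosed
      (isClosed_closedBall.inter isClosed_closedBall) isClosed_Iic
  have hLnorm : 2 * κ ≤ ‖L (Pi.single 0 (ζ 0))‖ :=
    (hL 0).trans (by simpa [hη] using real_inner_le_norm η (L (Pi.single 0 (ζ 0))))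
  refine (volume_le_of_one_sub_norm_le_of_slice hclosed.measurableSet (div_nonneg hδ hκ0.le)
    ((div_le_one hκ0).2 hδκ) (fun z hz => hz.1.1) (fun z hz j => ?_) 0 fun x x' y hx hx' =>
      dist_le_of_insertNth_mem_sublevel (hf.mono_set hsub) hκ (hζ 0) hLnorm hx hx').trans_eq ?_
  · rw [le_div_iff₀' hκ0]
    exact (mul_one_sub_norm_le_norm_sub hf hmap (hζ j) hη (hL j) hz.1).trans hz.2
  · rw [← ENNReal.ofReal_coe_nnreal, NNReal.coe_real_pi, ← ENNReal.ofReal_pow (by positivity),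
      ← ENNReal.ofReal_pow (by positivity), ← ENNReal.ofReal_mul (by positivity),
      ← ENNReal.ofReal_mul (by positivity)]
    congr 1
    ring

theorem exists_volume_sublevel_le {m : ℕ} {f : (Fin (m + 1) → ℂ) → ℂ} {ζ : Fin (m + 1) → ℂ} {η : ℂ}
    (hf : ContDiffOn ℂ 1 f (closedBall 0 1))
    (hmap : MapsTo f (closedBall 0 1) (closedBall 0 1)) (hζ : ∀ j, ‖ζ j‖ = 1) (hη : ‖η‖ = 1)
    (hderiv : ∀ j, 0 < inner ℝ η (fderivWithin ℂ f (closedBall 0 1) ζ (Pi.single j (ζ j)))) :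
    ∃ r > 0, ∃ C > (0 : ℝ), ∃ δ₀ > (0 : ℝ), ∀ δ, 0 ≤ δ → δ ≤ δ₀ →
      volume {z ∈ closedBall 0 1 ∩ closedBall ζ r | ‖f z - η‖ ≤ δ} ≤
        ENNReal.ofReal (C * δ ^ (m + 2)) := by
  have hζK : ζ ∈ closedBall 0 1 :=
    mem_closedBall_zero_iff.2 ((pi_norm_le_iff_of_nonneg zero_le_one).2 fun j => (hζ j).le)
  have hu : UniqueDiffOn ℂ (closedBall (0 : Fin (m + 1) → ℂ) 1) :=
    (uniqueDiffOn_convex (convex_closedBall 0 1)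
      ⟨0, ball_subset_interior_closedBall (mem_ball_self one_pos)⟩).mono_field (𝕜 := ℝ)
  obtain ⟨ε, hε, hεL⟩ := Pi.exists_forall_pos_add_lt hderiv
  have hκ : 0 < (ε / 2).toNNReal := Real.toNNReal_pos.2 (half_pos hε)
  have hL (j) : 2 * ((ε / 2).toNNReal : ℝ) ≤
      inner ℝ η (fderivWithin ℂ f (closedBall 0 1) ζ (Pi.single j (ζ j))) := by
    rw [Real.coe_toNNReal _ (half_pos hε).le]
    linarith [hεL j]
  obtain ⟨r, hr, happrox⟩ :=
    exists_approximatesLinearOn_inter_closedBall (convex_closedBall 0 1) hu hf hζK hκ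
  rw [← mul_div_cancel₀ r (two_ne_zero' ℝ)] at happrox
  exact ⟨r / 2, half_pos hr, _, by positivity, (ε / 2).toNNReal, hκ, fun δ hδ hδκ =>
    volume_sublevel_le happrox hmap hζ hη hκ hL (half_pos hr).le hδ hδκ⟩

theorem polydisc_eq_ball (n : ℕ) : polydisc n = ball 0 1 := by
  ext z
  simp [polydisc, pi_norm_lt_iff]

theorem closedPolydisc_eq_closedBall (n : ℕ) : closedPolydisc n = closedBall 0 1 := by
  ext z
  simp [closedPolydisc, pi_norm_le_iff_of_nonneg]

theorem sublevel_upper_bound (n : ℕ) (f : (Fin n → ℂ) → ℂ)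
    (hhol : DifferentiableOn ℂ f (polydisc n))
    (hsm : ContDiffOn ℝ 1 f (closedPolydisc n))
    (hmap : ∀ z ∈ polydisc n, ‖f z‖ < 1)
    (ζ : Fin n → ℂ) (hζ : ζ ∈ torus n) (η : ℂ) (hη : ‖η‖ = 1) (hfζ : f ζ = η)
    (hnonconst : ∀ j : Fin n, ∃ z ∈ Metric.ball (0:ℂ) 1, ∃ w ∈ Metric.ball (0:ℂ) 1,
      f (Function.update ζ j z) ≠ f (Function.update ζ j w)) :
    ∃ U ∈ nhds ζ, ∃ C > (0:ℝ), ∃ δ₀ > (0:ℝ), ∀ δ : ℝ, 0 < δ → δ < δ₀ →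
      volume {z | z ∈ polydisc n ∩ U ∧ ‖f z - η‖ ≤ δ} ≤
        ENNReal.ofReal (C * δ ^ (n + 1)) := by
  rw [polydisc_eq_ball] at hhol hmap
  rw [closedPolydisc_eq_closedBall] at hsm
  have hmaps : MapsTo f (closedBall 0 1) (closedBall 0 1) :=
    mapsTo_closedBall_of_mapsTo_ball one_ne_zero hsm.continuousOn fun z hz =>
      mem_ball_zero_iff.2 (hmap z hz)
  obtain _ | m := n
  · exact absurd (hmap ζ (by simp [Subsingleton.elim ζ 0])) (by simp [hfζ, hη])
  have hζK : ζ ∈ closedBall 0 1 := closedPolydisc_eq_closedBall _ ▸ fun j => (hζ j).le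
  have hf : ContDiffOn ℂ 1 f (closedBall 0 1) :=
    contDiffOn_complex_one_of_interior (convex_closedBall 0 1)
      ⟨0, ball_subset_interior_closedBall (mem_ball_self one_pos)⟩ hsm
      (by rwa [interior_closedBall _ one_ne_zero])
  obtain ⟨r, hr, C, hC, δ₀, hδ₀, hbound⟩ :=
    exists_volume_sublevel_le hf hmaps hζ (hfζ ▸ hη) fun j =>
      inner_fderivWithin_single_pos (hf.differentiableOn one_ne_zero) hmaps hζK (hζ j) (hfζ ▸ hη)
        (hnonconst j)
  refine ⟨closedBall ζ r, closedBall_mem_nhds ζ hr, C, hC, δ₀, hδ₀, fun δ hδ hδδ₀ =>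
    (measure_mono fun z hz => ?_).trans (hbound δ hδ.le hδδ₀.le)⟩
  rw [polydisc_eq_ball] at hz
  exact ⟨⟨ball_subset_closedBall hz.1.1, hz.1.2⟩, hfζ ▸ hz.2⟩

end
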